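/- For every odd integer r ≥ 9, every r-regular graph admits a zero-sum 5-flow. -/

import Mathlib

open Finset SimpleGraph

/-!
Read every edge as a pair of opposite darts, and allow half-edges, which are their own reversal.

Suppose first that an `r`-regular such graph is bridgeless, and write `r = k + m` with `k` even and
`k ≤ m < 2 * k`. Tutte's theorem, applied to an auxiliary graph, yields a set `P` of edges and
half-edges that has degree `k` at every vertex. Joining the source of a dart to the source of its
reversal turns `P` into a `k`-regular bipartite multigraph and its complement into an `m`-regular
one. By Hall's theorem both split into perfect matchings, so both carry weights `1` and `2` with a
common total `W ∈ {m, m + 1}` at every vertex. Negate the weights off `P` and give each edge the sum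
of the weights of its two darts: this is a zero-sum flow with values of modulus `2`, `3` or `4`, and
the choice of `W` and of the matchings allows us to prescribe its value `±2` or `±4` on one
half-edge.

In general, cut a bridge into two half-edges and induct: flows on the two sides which agree on the
cut bridge can be glued.
-/

section Biregular

variable {A V : Type*} [DecidableEq V] {s t : A → V} {S T : Finset A} {d e n : ℕ}

/-- The elements of `S`, read as edges of a bipartite multigraph joining `s a` on one side to `t a`
on the other, give degree `d` to every vertex of either side. -/
structure IsBiregular (s t : A → V) (S : Finset A) (d : ℕ) : Prop where
  card_left : ∀ v, #{a ∈ S | s a = v} = d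
  card_right : ∀ v, #{a ∈ S | t a = v} = d

theorem card_filter_mem_eq_mul (hs : ∀ v, #{a ∈ S | s a = v} = d) (X : Finset V) :
    #{a ∈ S | s a ∈ X} = #X * d := by
  have hmaps : Set.MapsTo s {a ∈ S | s a ∈ X} X := fun a ha ↦ ha.2
  rw [card_eq_sum_card_fiberwise (f := s) (t := X) (by simpa using hmaps), sum_const_nat]
  intro v hv
  rw [← hs v, filter_filter]
  congr 1 with a
  grind

theorem card_filter_sdiff_eq_sub [DecidableEq A] (hTS : T ⊆ S) (p : A → Prop) [DecidablePred p] :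
    #{a ∈ S \ T | p a} = #{a ∈ S | p a} - #{a ∈ T | p a} := by
  rw [← card_sdiff_of_subset (filter_subset_filter p hTS)]
  congr 1 with a
  grind

namespace IsBiregular

theorem sdiff [DecidableEq A] (hS : IsBiregular s t S d) (hT : IsBiregular s t T e) (hTS : T ⊆ S) :
    IsBiregular s t (S \ T) (d - e) where
  card_left v := by rw [card_filter_sdiff_eq_sub hTS, hS.card_left, hT.card_left]
  card_right v := by rw [card_filter_sdiff_eq_sub hTS, hS.card_right, hT.card_right]

theorem pos_of_mem {a : A} (hS : IsBiregular s t S d) (ha : a ∈ S) : 0 < d := by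
  rw [← hS.card_left (s a)]
  exact card_pos.2 ⟨a, mem_filter.2 ⟨ha, rfl⟩⟩

theorem card_le_card_biUnion_image (hS : IsBiregular s t S d) (hd : 0 < d) (X : Finset V) :
    #X ≤ #(X.biUnion fun v ↦ {a ∈ S | s a = v}.image t) := by
  refine Nat.le_of_mul_le_mul_right ?_ hd
  rw [← card_filter_mem_eq_mul hS.card_left, ← card_filter_mem_eq_mul hS.card_right]
  refine card_le_card fun a ha ↦ ?_
  grind

variable [Finite V]

theorem exists_subset_one (hS : IsBiregular s t S d) (hd : 0 < d) :
    ∃ T ⊆ S, IsBiregular s t T 1 := by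
  classical
  have := Fintype.ofFinite V
  obtain ⟨g, hg, hgS⟩ := (all_card_le_biUnion_card_iff_exists_injective _).1
    (hS.card_le_card_biUnion_image hd)
  have hg' : Function.Surjective g := Finite.surjective_of_injective hg
  have hedge (v : V) : ∃ a ∈ S, s a = v ∧ t a = g v := by
    simpa [and_assoc] using hgS v
  choose edge hedgeS hs ht using hedge
  refine ⟨univ.image edge, by simpa [image_subset_iff] using hedgeS, fun v ↦ ?_, fun v ↦ ?_⟩
  · refine card_eq_one.2 ⟨edge v, ?_⟩
    ext a
    grind
  · obtain ⟨u, rfl⟩ := hg' v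
    refine card_eq_one.2 ⟨edge u, ?_⟩
    ext a
    grind [Function.Injective]

theorem exists_subset_one_mem (hS : IsBiregular s t S d) {a : A} (ha : a ∈ S) :
    ∃ T ⊆ S, IsBiregular s t T 1 ∧ a ∈ T := by
  classical
  induction d generalizing S with
  | zero => exact absurd (hS.pos_of_mem ha) (lt_irrefl 0)
  | succ d ih =>
    obtain ⟨T, hTS, hT⟩ := hS.exists_subset_one d.succ_pos
    by_cases haT : a ∈ T
    · exact ⟨T, hTS, hT, haT⟩
    · obtain ⟨T', hT'S, hT'⟩ := ih (hS.sdiff hT hTS) (mem_sdiff.2 ⟨ha, haT⟩)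
      exact ⟨T', hT'S.trans sdiff_subset, hT'⟩

theorem exists_subset (hS : IsBiregular s t S d) (hn : n ≤ d) : ∃ T ⊆ S, IsBiregular s t T n := by
  classical
  induction hn using Nat.decreasingInduction with
  | self => exact ⟨S, Subset.rfl, hS⟩
  | of_succ n _ ih =>
    obtain ⟨T, hTS, hT⟩ := ih
    obtain ⟨T', hT'T, hT'⟩ := hT.exists_subset_one n.succ_pos
    exact ⟨T \ T', sdiff_subset.trans hTS, hT.sdiff hT' hT'T⟩

theorem exists_subset_notMem (hS : IsBiregular s t S d) (hn : n < d) (a : A) :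
    ∃ T ⊆ S, IsBiregular s t T n ∧ a ∉ T := by
  classical
  by_cases ha : a ∈ S
  · obtain ⟨T, hTS, hT, haT⟩ := hS.exists_subset_one_mem ha
    obtain ⟨T', hT'S, hT'⟩ := (hS.sdiff hT hTS).exists_subset (Nat.le_sub_one_of_lt hn)
    exact ⟨T', hT'S.trans sdiff_subset, hT', fun h ↦ (mem_sdiff.1 (hT'S h)).2 haT⟩
  · obtain ⟨T, hTS, hT⟩ := hS.exists_subset hn.le
    exact ⟨T, hTS, hT, fun h ↦ ha (hTS h)⟩

end IsBiregular

/-- A weighting of the edges of the bipartite multigraph `(s, t, S)` by `1` and `2`, with the same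
total weight `W` at every vertex of either side. -/
structure IsBalancedWeighting (s t : A → V) (S : Finset A) (W : ℤ) (w : A → ℤ) : Prop where
  eq_one_or_two : ∀ a, w a = 1 ∨ w a = 2
  sum_left : ∀ v, ∑ a ∈ S with s a = v, w a = W
  sum_right : ∀ v, ∑ a ∈ S with t a = v, w a = W

theorem IsBiregular.isBalancedWeighting_ite [DecidableEq A] (hS : IsBiregular s t S d)
    (hT : IsBiregular s t T n) (hTS : T ⊆ S) :
    IsBalancedWeighting s t S (d + n) fun a ↦ if a ∈ T then 2 else 1 := by
  have hsum (u : A → V) (v : V) : ∑ a ∈ S with u a = v, (if a ∈ T then 2 else 1 : ℤ) =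
      #{a ∈ S | u a = v} + #{a ∈ T | u a = v} := by
    have hT' : {a ∈ T | u a = v} = {a ∈ {a ∈ S | u a = v} | a ∈ T} := by grind
    have hw (a : A) : (if a ∈ T then 2 else 1 : ℤ) = 1 + if a ∈ T then 1 else 0 := by grind
    rw [hT', sum_congr rfl fun a _ ↦ hw a, sum_add_distrib, sum_boole, sum_const]
    simp
  refine ⟨fun a ↦ by grind, fun v ↦ ?_, fun v ↦ ?_⟩
  · rw [hsum, hS.card_left, hT.card_left]
  · rw [hsum, hS.card_right, hT.card_right]

theorem IsBalancedWeighting.three_sub {W : ℤ} {w : A → ℤ}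
    (hw : IsBalancedWeighting s t S W w) (hS : IsBiregular s t S d) :
    IsBalancedWeighting s t S (3 * d - W) fun a ↦ 3 - w a where
  eq_one_or_two a := by have := hw.eq_one_or_two a; omega
  sum_left v := by
    rw [sum_sub_distrib, hw.sum_left, sum_const, hS.card_left, nsmul_eq_mul, mul_comm]
  sum_right v := by
    rw [sum_sub_distrib, hw.sum_right, sum_const, hS.card_right, nsmul_eq_mul, mul_comm]

theorem IsBiregular.exists_balancedWeighting_eq_one [Finite V] (hS : IsBiregular s t S d) {W : ℕ}
    (hdW : d ≤ W) (hWd : W < 2 * d) (a : A) : ∃ w, IsBalancedWeighting s t S W w ∧ w a = 1 := by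
  classical
  obtain ⟨T, hTS, hT, haT⟩ := hS.exists_subset_notMem (n := W - d) (by omega) a
  have hw := hS.isBalancedWeighting_ite hT hTS
  rw [← Nat.cast_add, Nat.add_sub_cancel' hdW] at hw
  exact ⟨_, hw, if_neg haT⟩

theorem IsBiregular.exists_balancedWeighting_eq_two [Finite V] (hS : IsBiregular s t S d) {W : ℕ}
    (hdW : d < W) (hWd : W ≤ 2 * d) (a : A) : ∃ w, IsBalancedWeighting s t S W w ∧ w a = 2 := by
  obtain ⟨w, hw, hwa⟩ :=
    hS.exists_balancedWeighting_eq_one (W := 3 * d - W) (by omega) (by omega) a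
  have hw' := hw.three_sub hS
  rw [show (3 * d - (3 * d - W : ℕ) : ℤ) = W by omega] at hw'
  exact ⟨_, hw', by simp only [hwa]; norm_num⟩

-- Total weight `e` leaves room to prescribe `1`, and total weight `e + 1` to prescribe `2`.
theorem IsBiregular.exists_balancedWeighting_pair [Finite V] (hS : IsBiregular s t S d)
    (hT : IsBiregular s t T e) (hde : d ≤ e) (hed : e < 2 * d) (a : A) {ζ : ℤ}
    (hζ : ζ = 1 ∨ ζ = 2) : ∃ (W : ℤ) (w w' : A → ℤ), IsBalancedWeighting s t S W w ∧
      IsBalancedWeighting s t T W w' ∧ w a = ζ ∧ w' a = ζ := by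
  rcases hζ with rfl | rfl
  · obtain ⟨w, hw, hwa⟩ := hS.exists_balancedWeighting_eq_one hde hed a
    obtain ⟨w', hw', hwa'⟩ := hT.exists_balancedWeighting_eq_one le_rfl (by omega) a
    exact ⟨e, w, w', hw, hw', hwa, hwa'⟩
  · obtain ⟨w, hw, hwa⟩ :=
      hS.exists_balancedWeighting_eq_two (W := e + 1) (by omega) (by omega) a
    obtain ⟨w', hw', hwa'⟩ :=
      hT.exists_balancedWeighting_eq_two (W := e + 1) (by omega) (by omega) a
    exact ⟨_, w, w', hw, hw', hwa, hwa'⟩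

end Biregular

section PerfectMatching

variable {W : Type*} {Γ : SimpleGraph W} {u : Set W}

/-- The vertex set, inside `Γ`, of a connected component of `Γ - u`. -/
def deletedComponentVerts (c : ((⊤ : Γ.Subgraph).deleteVerts u).coe.ConnectedComponent) : Set W :=
  Subtype.val '' c.supp

variable {c c' : ((⊤ : Γ.Subgraph).deleteVerts u).coe.ConnectedComponent} {x y : W}

theorem notMem_of_mem_deletedComponentVerts (hx : x ∈ deletedComponentVerts c) : x ∉ u := by
  obtain ⟨x, -, rfl⟩ := hx
  simpa using x.2

theorem eq_of_mem_deletedComponentVerts (hx : x ∈ deletedComponentVerts c)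
    (hx' : x ∈ deletedComponentVerts c') : c = c' := by
  obtain ⟨x, hxc, rfl⟩ := hx
  obtain ⟨x', hxc', hxx'⟩ := hx'
  rw [Subtype.ext hxx'] at hxc'
  exact hxc.symm.trans hxc'

theorem mem_deletedComponentVerts_of_adj (hx : x ∈ deletedComponentVerts c) (hxy : Γ.Adj x y)
    (hy : y ∉ u) : y ∈ deletedComponentVerts c := by
  have hxu := notMem_of_mem_deletedComponentVerts hx
  obtain ⟨x, hxc, rfl⟩ := hx
  refine ⟨⟨y, by simpa using hy⟩, ?_, rfl⟩
  refine (ConnectedComponent.mem_supp_congr_adj c ?_).1 hxc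
  simp [hxu, hy, hxy]

theorem ncard_add_one_lt_of_isTutteViolator [Finite W] (hW : Even (Nat.card W))
    (hu : Γ.IsTutteViolator u) :
    u.ncard + 1 < ((⊤ : Γ.Subgraph).deleteVerts u).coe.oddComponents.ncard := by
  have hparity := odd_ncard_oddComponents (G := ((⊤ : Γ.Subgraph).deleteVerts u).coe)
  have hverts : ((⊤ : Γ.Subgraph).deleteVerts u).verts.ncard = uᶜ.ncard := by
    congr 1
    ext
    simp
  have hcard := Set.ncard_add_ncard_compl u
  rw [Nat.card_coe_set_eq] at hparity
  unfold IsTutteViolator at hu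
  grind

theorem card_le_card_of_weights [Fintype W] {ι : Type*} {w : W → W → ℕ} {r : ℕ} (hr : 0 < r)
    {I : Finset ι} {K : ι → Finset W} (hK : (I : Set ι).PairwiseDisjoint K) {U : Finset W}
    (hout : ∀ i ∈ I, r ≤ ∑ p ∈ K i, ∑ q ∈ U, w p q) (hin : ∀ q, ∑ p, w p q ≤ r) :
    #I ≤ #U := by
  classical
  refine Nat.le_of_mul_le_mul_right ?_ hr
  calc
    #I * r ≤ ∑ i ∈ I, ∑ p ∈ K i, ∑ q ∈ U, w p q := by simpa using card_nsmul_le_sum I _ r hout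
    _ = ∑ q ∈ U, ∑ p ∈ I.biUnion K, w p q := by rw [← sum_biUnion hK, sum_comm]
    _ ≤ ∑ q ∈ U, ∑ p, w p q :=
      sum_le_sum fun q _ ↦ sum_le_sum_of_subset (subset_univ _)
    _ ≤ #U * r := by simpa using sum_le_card_nsmul U _ r fun q _ ↦ hin q

variable [Fintype W] [DecidableEq W]

/-- The total weight leaving the vertex set `K`. -/
def cutWeight (w : W → W → ℕ) (K : Finset W) : ℕ := ∑ p ∈ K, ∑ q ∈ Kᶜ, w p q

theorem cutWeight_add (w w' : W → W → ℕ) (K : Finset W) :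
    cutWeight (w + w') K = cutWeight w K + cutWeight w' K := by
  simp only [cutWeight, Pi.add_apply, sum_add_distrib]

theorem le_cutWeight (w : W → W → ℕ) {K : Finset W} {p q : W} (hp : p ∈ K) (hq : q ∉ K) :
    w p q ≤ cutWeight w K :=
  (single_le_sum_of_canonicallyOrdered (f := w p) (mem_compl.2 hq)).trans
    (single_le_sum_of_canonicallyOrdered (f := fun p ↦ ∑ q ∈ Kᶜ, w p q) hp)

theorem cutWeight_eq_sum_univ (w : W → W → ℕ) (K : Finset W) :
    cutWeight w K = ∑ p, ∑ q, if p ∈ K ∧ q ∉ K then w p q else 0 := by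
  rw [cutWeight, ← sum_subset (subset_univ K)]
  · refine sum_congr rfl fun p hp ↦ ?_
    simp only [hp, true_and, ← mem_compl, sum_ite_mem, univ_inter]
  · intro p _ hp
    simp only [hp, false_and, if_false, sum_const_zero]

theorem card_oddComponents_le_of_cutWeight {w : W → W → ℕ} {Q : Set W} {r : ℕ} (hr : 0 < r)
    (hadj : ∀ p q, w p q ≠ 0 → Γ.Adj p q) (hin : ∀ q, ∑ p, w p q ≤ r)
    (hcut : ∀ K : Finset W, Odd #K → Disjoint (K : Set W) Q → r ≤ cutWeight w K)
    (hQ : Γ.IsClique Q) (u : Set W) :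
    ((⊤ : Γ.Subgraph).deleteVerts u).coe.oddComponents.ncard ≤ u.ncard + 1 := by
  classical
  let K (c : ((⊤ : Γ.Subgraph).deleteVerts u).coe.ConnectedComponent) : Finset W :=
    (deletedComponentVerts c).toFinset
  let odd : Finset ((⊤ : Γ.Subgraph).deleteVerts u).coe.ConnectedComponent :=
    (oddComponents _).toFinset
  have hK_disjoint (I : Set _) : I.PairwiseDisjoint K := fun c _ c' _ hcc' ↦
    disjoint_left.2 fun x hx hx' ↦ hcc' <| eq_of_mem_deletedComponentVerts
      (Set.mem_toFinset.1 hx) (Set.mem_toFinset.1 hx')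
  have hK_odd {c} (hc : c ∈ odd) : Odd #(K c) := by
    rw [← Set.ncard_eq_toFinset_card', deletedComponentVerts,
      Set.ncard_image_of_injective _ Subtype.val_injective]
    simpa only [odd, Set.mem_toFinset, oddComponents, Set.mem_ofPred_eq] using hc
  have hmeet : #{c ∈ odd | ¬Disjoint (K c : Set W) Q} ≤ 1 := by
    refine card_le_one.2 fun c hc c' hc' ↦ ?_
    obtain ⟨x, hxc, hxQ⟩ := Set.not_disjoint_iff.1 (mem_filter.1 hc).2
    obtain ⟨y, hyc', hyQ⟩ := Set.not_disjoint_iff.1 (mem_filter.1 hc').2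
    rw [mem_coe, Set.mem_toFinset] at hxc hyc'
    rcases eq_or_ne x y with rfl | hxy
    · exact eq_of_mem_deletedComponentVerts hxc hyc'
    · exact eq_of_mem_deletedComponentVerts (mem_deletedComponentVerts_of_adj hxc
        (hQ hxQ hyQ hxy) (notMem_of_mem_deletedComponentVerts hyc')) hyc'
  have havoid : #{c ∈ odd | Disjoint (K c : Set W) Q} ≤ #u.toFinset := by
    refine card_le_card_of_weights hr (hK_disjoint _) (fun c hc ↦ ?_) hin
    obtain ⟨hc, hcQ⟩ := mem_filter.1 hc
    refine (hcut (K c) (hK_odd hc) hcQ).trans (sum_le_sum fun p hp ↦ ?_)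
    refine sum_le_sum_of_ne_zero fun q hq hpq ↦ ?_
    rw [Set.mem_toFinset] at hp ⊢
    by_contra hqu
    exact mem_compl.1 hq
      (Set.mem_toFinset.2 (mem_deletedComponentVerts_of_adj hp (hadj p q hpq) hqu))
  rw [Set.ncard_eq_toFinset_card', Set.ncard_eq_toFinset_card',
    ← card_filter_add_card_filter_not fun c ↦ Disjoint (K c : Set W) Q]
  exact add_le_add havoid hmeet

-- An odd component of `Γ - u` that avoids `Q` sends weight at least `r` into `u`, each vertex of
-- `u` receives at most `r`, and at most one component meets the clique `Q`; parity does the rest.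
theorem exists_isPerfectMatching_of_cutWeight {w : W → W → ℕ} {Q : Set W} {r : ℕ} (hr : 0 < r)
    (hW : Even (Nat.card W)) (hadj : ∀ p q, w p q ≠ 0 → Γ.Adj p q) (hin : ∀ q, ∑ p, w p q ≤ r)
    (hcut : ∀ K : Finset W, Odd #K → Disjoint (K : Set W) Q → r ≤ cutWeight w K)
    (hQ : Γ.IsClique Q) : ∃ M : Γ.Subgraph, M.IsPerfectMatching :=
  tutte.2 fun u hu ↦ (ncard_add_one_lt_of_isTutteViolator hW hu).not_ge
    (card_oddComponents_le_of_cutWeight hr hadj hin hcut hQ u)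

end PerfectMatching

/-- A graph, possibly with loops, parallel edges and half-edges, given by its darts: `rev`
reverses a dart, and the half-edges are the darts fixed by `rev`. -/
structure HalfEdgeGraph (V A : Type*) where
  src : A → V
  rev : A → A
  rev_involutive : Function.Involutive rev

namespace HalfEdgeGraph

section Basic

variable {V A : Type*} (D : HalfEdgeGraph V A)

/-- The set of darts `X` is a union of edges and half-edges. -/
def IsRevClosed (X : Finset A) : Prop := ∀ a ∈ X, D.rev a ∈ X

variable {D} in
theorem IsRevClosed.rev_mem_iff {X : Finset A} (hX : D.IsRevClosed X) {a : A} :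
    D.rev a ∈ X ↔ a ∈ X :=
  ⟨fun ha ↦ D.rev_involutive a ▸ hX _ ha, hX a⟩

variable [Fintype A] [DecidableEq V]

/-- Every vertex is the source of `r` darts, so a half-edge contributes `1` and a loop `2` to the
degree of its vertex. -/
def IsRegular (r : ℕ) : Prop := ∀ v, #{a | D.src a = v} = r

/-- The darts leading out of the vertex set `U`. -/
def boundary (U : Finset V) : Finset A := {a | D.src a ∈ U ∧ D.src (D.rev a) ∉ U}

/-- No vertex set is left by exactly one dart. -/
def IsBridgeless : Prop := ∀ U : Finset V, #(D.boundary U) ≠ 1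

variable {D}

@[simp]
theorem mem_boundary {U : Finset V} {a : A} :
    a ∈ D.boundary U ↔ D.src a ∈ U ∧ D.src (D.rev a) ∉ U := by
  simp [boundary]

theorem boundary_compl [Fintype V] [DecidableEq A] (U : Finset V) :
    D.boundary Uᶜ = (D.boundary U).image D.rev := by
  ext a
  simp only [mem_boundary, mem_compl, not_not, mem_image]
  constructor
  · exact fun ha ↦ ⟨D.rev a, by rwa [D.rev_involutive, and_comm], D.rev_involutive a⟩
  · rintro ⟨b, hb, rfl⟩
    rwa [D.rev_involutive, and_comm]

theorem rev_ne_of_mem_boundary {U : Finset V} {a : A} (ha : a ∈ D.boundary U) :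
    D.rev a ≠ a := fun h ↦ by
  rw [mem_boundary, h] at ha
  exact ha.2 ha.1

theorem src_rev_mem_iff_of_boundary_eq_singleton {U : Finset V} {a b : A}
    (hU : D.boundary U = {a}) (hb : b ≠ a) (hb' : b ≠ D.rev a) :
    D.src (D.rev b) ∈ U ↔ D.src b ∈ U := by
  have hmem : b ∉ D.boundary U := by simpa [hU] using hb
  have hmem' : D.rev b ∉ D.boundary U := by
    simpa [hU, D.rev_involutive.eq_iff] using hb'
  rw [mem_boundary] at hmem hmem'
  rw [D.rev_involutive] at hmem'
  tauto

-- `U` is then left by `d` alone if `d ∉ X`, and by `rev d` alone if `d ∈ X`.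
theorem IsRevClosed.card_boundary_eq_one {X : Finset A} (hX : D.IsRevClosed X)
    {U : Finset V} {d : A} (hd : D.rev d ≠ d)
    (hXU : ∀ a, (a ∈ X ↔ D.src a ∈ U) ↔ a ≠ d) : #(D.boundary U) = 1 := by
  classical
  have hsrc (a : A) : D.src a ∈ U ↔ (a ∈ X ↔ a ≠ d) := by grind
  refine card_eq_one.2 ⟨if d ∈ X then D.rev d else d, ext fun a ↦ ?_⟩
  have hrev : D.rev a = d ↔ a = D.rev d := D.rev_involutive.eq_iff
  have hmem : D.rev a ∈ X ↔ a ∈ X := hX.rev_mem_iff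
  have hmem' : D.rev d ∈ X ↔ d ∈ X := hX.rev_mem_iff
  rw [mem_boundary, mem_singleton, hsrc, hsrc]
  grind

theorem IsRegular.card_eq [Fintype V] {r : ℕ} (hD : D.IsRegular r) :
    Fintype.card A = Fintype.card V * r := by
  simpa using card_filter_mem_eq_mul hD univ

end Basic

section Gadget

open Sum

variable {V A : Type*} (D : HalfEdgeGraph V A) {k m : ℕ}

/-- The auxiliary graph whose perfect matchings encode the regular factors of `D`: its vertices are
the darts of `D` together with `m` cores at each vertex of `D`. In a perfect matching the cores at
`v` absorb `m` of the darts at `v`, and the other darts are matched to their reversals or, being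
half-edges, among each other. -/
def gadget (m : ℕ) : SimpleGraph (A ⊕ V × Fin m) where
  Adj
    | inl a, inl b => a ≠ b ∧ (D.rev a = b ∨ D.rev a = a ∧ D.rev b = b)
    | inl a, inr x => D.src a = x.1
    | inr x, inl a => D.src a = x.1
    | inr _, inr _ => False
  symm.symm
    | inl _, inl _, h => ⟨h.1.symm, h.2.imp (D.rev_involutive.eq_iff.1 · |>.symm) And.symm⟩
    | inl _, inr _, h => h
    | inr _, inl _, h => h
  loopless.irrefl
    | inl _, h => h.1 rfl

variable [DecidableEq V]

variable {D} in
theorem IsRegular.card_eq_mul_of_mem_iff [Fintype A] {r : ℕ} (hD : D.IsRegular r)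
    {K : Finset (A ⊕ V × Fin m)} {U : Finset V} (hU : ∀ v j, inr (v, j) ∈ K ↔ v ∈ U)
    (hdart : ∀ a, inl a ∈ K ↔ D.src a ∈ U) :
    #K = #U * (r + m) := by
  have hleft : K.toLeft = univ.filter fun a ↦ D.src a ∈ U := by
    ext a
    simp [hdart]
  have hright : K.toRight = U ×ˢ univ := by
    ext ⟨v, j⟩
    simp [hU]
  rw [← card_toLeft_add_card_toRight, hleft, hright, card_filter_mem_eq_mul hD, card_product,
    card_univ, Fintype.card_fin, mul_add]

variable [DecidableEq A]

/-- Weight `1` in both directions between each dart and each core at its source. -/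
def incidenceWeight : A ⊕ V × Fin m → A ⊕ V × Fin m → ℕ
  | inl a, inr x => if D.src a = x.1 then 1 else 0
  | inr x, inl a => if D.src a = x.1 then 1 else 0
  | _, _ => 0

/-- Weight `k` into each dart: from its reversal or, if the dart is a half-edge, from the core
indexed by `0` at its source. -/
def reversalWeight (k : ℕ) : A ⊕ V × Fin m → A ⊕ V × Fin m → ℕ
  | inl a, inl b => if D.rev a = b ∧ a ≠ b then k else 0
  | inr x, inl a => if D.rev a = a ∧ D.src a = x.1 ∧ x.2.val = 0 then k else 0
  | _, _ => 0

/-- The total weight on the gadget. Divided by `k + m` it is, in a `(k + m)`-regular graph without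
half-edges, a fractional perfect matching. -/
def gadgetWeight (k : ℕ) : A ⊕ V × Fin m → A ⊕ V × Fin m → ℕ :=
  D.incidenceWeight + D.reversalWeight k

variable {D}

theorem adj_gadget_of_gadgetWeight_ne_zero {p q : A ⊕ V × Fin m} (h : D.gadgetWeight k p q ≠ 0) :
    (D.gadget m).Adj p q := by
  rcases p with a | x <;> rcases q with b | y <;>
    simp [gadgetWeight, incidenceWeight, reversalWeight, gadget] at h ⊢ <;> tauto

variable [Fintype A] [Fintype V]

variable (D) in
theorem sum_gadgetWeight_inl_le (k : ℕ) (b : A) :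
    ∑ p : A ⊕ V × Fin m, D.gadgetWeight k p (inl b) ≤ k + m := by
  have hcores : ∑ x : V × Fin m, (if D.src b = x.1 then 1 else 0) = m := by
    rw [Fintype.sum_prod_type_right]
    simp
  have hdarts : ∑ a, (if D.rev a = b ∧ a ≠ b then k else 0) = if D.rev b = b then 0 else k := by
    have hterm (a : A) : (if D.rev a = b ∧ a ≠ b then k else 0) =
        if a = D.rev b then (if D.rev b = b then 0 else k) else 0 := by
      have := D.rev_involutive.eq_iff (x := a) (y := b)
      grind
    simp only [hterm, sum_ite_eq', mem_univ, if_true]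
  have hhalf : ∑ x : V × Fin m, (if D.rev b = b ∧ D.src b = x.1 ∧ x.2.val = 0 then k else 0) ≤
      if D.rev b = b then k else 0 := by
    have hzero : ∑ j : Fin m, (if j.val = 0 then k else 0) ≤ k := by
      cases m <;> simp
    split_ifs with hb
    · simp [Fintype.sum_prod_type, hb, ite_and, hzero]
    · simp [hb]
  simp only [gadgetWeight, Pi.add_apply, incidenceWeight, reversalWeight, Fintype.sum_sum_type,
    sum_add_distrib, hcores, hdarts, sum_const_zero]
  grind

theorem IsRegular.sum_gadgetWeight_inr {r : ℕ} (hD : D.IsRegular r) (k : ℕ) (x : V × Fin m) :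
    ∑ p, D.gadgetWeight k p (inr x) = r := by
  simp [gadgetWeight, incidenceWeight, reversalWeight, hD x.1]

variable (D) in
theorem cutWeight_incidenceWeight (K : Finset (A ⊕ V × Fin m)) :
    cutWeight D.incidenceWeight K =
      ∑ a, #{j : Fin m | ¬(inl a ∈ K ↔ inr (D.src a, j) ∈ K)} := by
  rw [cutWeight_eq_sum_univ, Fintype.sum_sum_type]
  simp only [incidenceWeight, Fintype.sum_sum_type, ite_self, sum_const_zero, zero_add, add_zero]
  rw [sum_comm (γ := V × Fin m), ← sum_add_distrib]
  refine sum_congr rfl fun a _ ↦ ?_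
  rw [← sum_add_distrib, Fintype.sum_prod_type, sum_eq_single (D.src a), card_filter]
  · refine sum_congr rfl fun j _ ↦ ?_
    grind
  · intro v _ hv
    simp [hv.symm]
  · simp

theorem IsRegular.exists_mem_iff_of_cutWeight_lt {r : ℕ} (hD : D.IsRegular r)
    {K : Finset (A ⊕ V × Fin m)} (hK : cutWeight D.incidenceWeight K < r) :
    ∃ U : Finset V, ∀ v j, inr (v, j) ∈ K ↔ v ∈ U := by
  refine ⟨univ.filter fun v ↦ ∃ j, inr (v, j) ∈ K, fun v j ↦ ?_⟩
  rw [mem_filter_univ]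
  refine ⟨fun hj ↦ ⟨j, hj⟩, fun ⟨i, hi⟩ ↦ by_contra fun hj ↦ hK.not_ge ?_⟩
  rw [cutWeight_incidenceWeight, ← hD v, card_eq_sum_ones]
  refine (sum_le_sum fun a ha ↦ ?_).trans (sum_le_sum_of_subset (subset_univ _))
  rw [mem_filter_univ] at ha
  refine card_pos.2 ⟨if inl a ∈ K then j else i, ?_⟩
  grind

variable {K : Finset (A ⊕ V × Fin m)} {U : Finset V}

theorem cutWeight_incidenceWeight_eq_mul (hU : ∀ v j, inr (v, j) ∈ K ↔ v ∈ U) :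
    cutWeight D.incidenceWeight K = m * #{a | ¬(inl a ∈ K ↔ D.src a ∈ U)} := by
  rw [cutWeight_incidenceWeight, card_filter, mul_sum]
  refine sum_congr rfl fun a _ ↦ ?_
  simp only [hU, filter_const]
  split_ifs <;> simp

theorem isRevClosed_toLeft_of_cutWeight_lt (hK : cutWeight (D.reversalWeight k) K < k) :
    D.IsRevClosed K.toLeft := by
  intro a ha
  by_contra hrev
  rw [mem_toLeft] at ha hrev
  refine hK.not_ge ((?_ : k ≤ D.reversalWeight k (inl a) (inl (D.rev a))).trans
    (le_cutWeight _ ha hrev))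
  grind [reversalWeight]

theorem rev_ne_of_cutWeight_lt (hm : 0 < m) (hK : cutWeight (D.reversalWeight k) K < k) {d : A}
    (hd : inl d ∉ K) (hcores : ∀ j, inr (D.src d, j) ∈ K) : D.rev d ≠ d := by
  intro hrev
  refine hK.not_ge ((?_ : k ≤ D.reversalWeight k (inr (D.src d, ⟨0, hm⟩)) (inl d)).trans
    (le_cutWeight _ (hcores _) hd))
  simp [reversalWeight, hrev]

-- A cut lighter than `k + m` cannot separate the cores at a vertex, so up to at most one dart `d`
-- the set `K` consists of all darts and cores at the vertices of some `U`. Without an exceptional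
-- dart `#K` is even; otherwise `d` is a bridge.
theorem IsBridgeless.le_cutWeight_gadgetWeight (hb : D.IsBridgeless) (hD : D.IsRegular (k + m))
    (hk : Even k) (hkm : k ≤ m) (hK : Odd #K) (hhalf : ∀ a, inl a ∈ K → D.rev a ≠ a) :
    k + m ≤ cutWeight (D.gadgetWeight k) K := by
  by_contra! hlt
  rw [gadgetWeight, cutWeight_add] at hlt
  obtain ⟨U, hU⟩ := hD.exists_mem_iff_of_cutWeight_lt ((Nat.le_add_right _ _).trans_lt hlt)
  rw [cutWeight_incidenceWeight_eq_mul hU] at hlt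
  have hne_zero : #{a | ¬(inl a ∈ K ↔ D.src a ∈ U)} ≠ 0 := by
    intro hzero
    have hcard := hD.card_eq_mul_of_mem_iff hU (by simpa [filter_eq_empty_iff] using hzero)
    rw [hcard, add_assoc] at hK
    exact Nat.not_even_iff_odd.2 hK ((hk.add (Even.add_self m)).mul_left _)
  have hle_one : #{a | ¬(inl a ∈ K ↔ D.src a ∈ U)} ≤ 1 := by
    refine Nat.le_of_lt_succ (Nat.lt_of_mul_lt_mul_left (a := m) ?_)
    omega
  have hone := hle_one.antisymm (Nat.one_le_iff_ne_zero.2 hne_zero)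
  rw [hone, mul_one] at hlt
  have hrevWeight : cutWeight (D.reversalWeight k) K < k := by omega
  obtain ⟨d, hd⟩ := card_eq_one.1 hone
  have hd' (a : A) : (inl a ∈ K ↔ D.src a ∈ U) ↔ a ≠ d := by
    rw [Ne, ← mem_singleton, ← hd, mem_filter_univ, not_not]
  have hrev : D.rev d ≠ d := by
    by_cases hdK : inl d ∈ K
    · exact hhalf d hdK
    · refine rev_ne_of_cutWeight_lt (by omega) hrevWeight hdK fun j ↦ ?_
      have := hd' d
      grind
  exact hb U ((isRevClosed_toLeft_of_cutWeight_lt hrevWeight).card_boundary_eq_one hrev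
    (by simpa using hd'))

end Gadget

section Factor

open Sum

variable {V A : Type*} {D : HalfEdgeGraph V A} {k m : ℕ}

theorem exists_adj_inl_rev_of_adj_inl {M : (D.gadget m).Subgraph} {a b : A}
    (hab : M.Adj (inl a) (inl b)) : ∃ c, M.Adj (inl (D.rev a)) (inl c) := by
  rcases hab.adj_sub.2 with hrev | ⟨hrev, -⟩
  · exact ⟨a, hrev ▸ hab.symm⟩
  · exact ⟨b, hrev.symm ▸ hab⟩

variable [DecidableEq V] [Fintype A]

open Classical in
theorem card_filter_not_exists_adj_inl {M : (D.gadget m).Subgraph} (hM : M.IsPerfectMatching)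
    (v : V) : #{a | D.src a = v ∧ ¬∃ b, M.Adj (inl a) (inl b)} = m := by
  have hunique {p q q' : A ⊕ V × Fin m} (hq : M.Adj p q) (hq' : M.Adj p q') : q = q' :=
    hM.1.eq_of_adj_left hq hq'
  have hcore (j : Fin m) : ∃ a, M.Adj (inl a) (inr (v, j)) := by
    obtain ⟨a | x, hp, -⟩ := Subgraph.isPerfectMatching_iff.1 hM (inr (v, j))
    · exact ⟨a, hp.symm⟩
    · exact hp.adj_sub.elim
  choose e he using hcore
  have he_inj : Function.Injective e := fun i j hij ↦ by
    have := hunique (he i) (hij ▸ he j)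
    grind
  suffices univ.filter (fun a ↦ D.src a = v ∧ ¬∃ b, M.Adj (inl a) (inl b)) = univ.image e by
    rw [this, card_image_of_injective _ he_inj, card_univ, Fintype.card_fin]
  ext a
  simp only [mem_filter_univ, mem_image, mem_univ, true_and]
  constructor
  · rintro ⟨rfl, hdart⟩
    obtain ⟨b | ⟨w, j⟩, hp, -⟩ := Subgraph.isPerfectMatching_iff.1 hM (inl a)
    · exact absurd ⟨b, hp⟩ hdart
    · obtain rfl : D.src a = w := hp.adj_sub
      exact ⟨j, inl_injective (hunique (he j).symm hp.symm)⟩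
  · rintro ⟨j, rfl⟩
    exact ⟨(he j).adj_sub, fun ⟨b, hb⟩ ↦ inl_ne_inr (hunique hb (he j))⟩

variable [Finite V]

theorem IsBridgeless.exists_isPerfectMatching_gadget (hb : D.IsBridgeless)
    (hD : D.IsRegular (k + m)) (hk : Even k) (hkm : k ≤ m) (hm : 0 < m) :
    ∃ M : (D.gadget m).Subgraph, M.IsPerfectMatching := by
  classical
  have := Fintype.ofFinite V
  refine exists_isPerfectMatching_of_cutWeight (w := D.gadgetWeight k)
    (Q := inl '' {a | D.rev a = a}) (r := k + m) (by omega) ?_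
    (fun p q ↦ adj_gadget_of_gadgetWeight_ne_zero) ?_ ?_ ?_
  · rw [Nat.card_eq_fintype_card, Fintype.card_sum, Fintype.card_prod, Fintype.card_fin, hD.card_eq,
      ← mul_add, add_assoc]
    exact (hk.add (Even.add_self m)).mul_left _
  · rintro (b | x)
    · exact D.sum_gadgetWeight_inl_le k b
    · exact (hD.sum_gadgetWeight_inr k x).le
  · refine fun K hK hKQ ↦ hb.le_cutWeight_gadgetWeight hD hk hkm hK fun a ha hrev ↦ ?_
    exact Set.disjoint_left.1 hKQ (mem_coe.2 ha) ⟨a, hrev, rfl⟩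
  · rintro _ ⟨a, ha, rfl⟩ _ ⟨b, hb, rfl⟩ hab
    exact ⟨ne_of_apply_ne inl hab, Or.inr ⟨ha, hb⟩⟩

theorem IsBridgeless.exists_isRevClosed (hb : D.IsBridgeless) (hD : D.IsRegular (k + m))
    (hk : Even k) (hkm : k ≤ m) (hm : 0 < m) :
    ∃ P : Finset A, D.IsRevClosed P ∧ ∀ v, #{a ∈ P | D.src a = v} = k := by
  classical
  obtain ⟨M, hM⟩ := hb.exists_isPerfectMatching_gadget hD hk hkm hm
  refine ⟨univ.filter fun a ↦ ∃ b, M.Adj (inl a) (inl b), fun a ha ↦ ?_, fun v ↦ ?_⟩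
  · rw [mem_filter_univ] at ha ⊢
    exact exists_adj_inl_rev_of_adj_inl ha.choose_spec
  · have hsplit := card_filter_add_card_filter_not (s := {a | D.src a = v})
      fun a ↦ ∃ b, M.Adj (inl a) (inl b)
    rw [hD v, filter_filter, filter_filter, card_filter_not_exists_adj_inl hM,
      Nat.add_right_cancel_iff] at hsplit
    rw [filter_filter, ← hsplit]
    congr 1 with a
    simp [and_comm]

end Factor

section Flow

variable {V A : Type*} {D : HalfEdgeGraph V A} {k m : ℕ} [DecidableEq V]

theorem IsRevClosed.isBiregular {P : Finset A} {d : ℕ} (hP : D.IsRevClosed P)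
    (hd : ∀ v, #{a ∈ P | D.src a = v} = d) :
    IsBiregular D.src (fun a ↦ D.src (D.rev a)) P d where
  card_left := hd
  card_right v := by
    rw [← hd v]
    refine card_bij' (fun a _ ↦ D.rev a) (fun a _ ↦ D.rev a) ?_ ?_
      (fun a _ ↦ D.rev_involutive a) (fun a _ ↦ D.rev_involutive a) <;>
      simp +contextual [hP.rev_mem_iff, D.rev_involutive _]

variable [Fintype A]

variable (D) in
/-- A zero-sum `5`-flow on the edges and half-edges of `D`, encoded as a `rev`-invariant function on
darts. Half-edges are required to carry even values, since a half-edge value arises as twice the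
weight of its dart. -/
structure IsZeroSumFiveFlow (f : A → ℤ) : Prop where
  map_rev : ∀ a, f (D.rev a) = f a
  ne_zero : ∀ a, f a ≠ 0
  natAbs_le : ∀ a, (f a).natAbs ≤ 4
  even_of_rev_eq : ∀ a, D.rev a = a → Even (f a)
  sum_eq_zero : ∀ v, ∑ a with D.src a = v, f a = 0

theorem IsZeroSumFiveFlow.neg {f : A → ℤ} (hf : D.IsZeroSumFiveFlow f) :
    D.IsZeroSumFiveFlow (-f) where
  map_rev a := by simp [hf.map_rev]
  ne_zero a := by simpa using hf.ne_zero a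
  natAbs_le a := by simpa using hf.natAbs_le a
  even_of_rev_eq a ha := (hf.even_of_rev_eq a ha).neg
  sum_eq_zero v := by simp [hf.sum_eq_zero]

variable (D) in
/-- Any single half-edge can be given any admissible value by a zero-sum `5`-flow. A dart `a`
that is not a half-edge imposes no condition on the flow, but a flow must still exist. -/
def HasPrescribableFlow : Prop :=
  ∀ a : A, ∀ z : ℤ, Even z → z ≠ 0 → z.natAbs ≤ 4 →
    ∃ f, D.IsZeroSumFiveFlow f ∧ (D.rev a = a → f a = z)

theorem IsRegular.isBiregular_univ {r : ℕ} (hD : D.IsRegular r) :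
    IsBiregular D.src (fun a ↦ D.src (D.rev a)) univ r :=
  IsRevClosed.isBiregular (fun _ _ ↦ mem_univ _) hD

theorem sum_filter_src_comp_rev {M : Type*} [AddCommMonoid M] (f : A → M) (v : V) :
    ∑ a with D.src a = v, f (D.rev a) = ∑ a with D.src (D.rev a) = v, f a := by
  refine sum_bij' (fun a _ ↦ D.rev a) (fun a _ ↦ D.rev a) ?_ ?_
    (fun a _ ↦ D.rev_involutive a) (fun a _ ↦ D.rev_involutive a) (fun _ _ ↦ rfl) <;>
    simp [D.rev_involutive _]

/-- The dart weighting equal to `w` on `P` and to `-w'` off `P`; adding up its values on a dart and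
on the reversal of the dart yields the flow. -/
def signedWeight [DecidableEq A] (P : Finset A) (w w' : A → ℤ) (a : A) : ℤ :=
  if a ∈ P then w a else -w' a

theorem sum_signedWeight [DecidableEq A] (P : Finset A) (w w' : A → ℤ) (p : A → Prop)
    [DecidablePred p] :
    ∑ a with p a, signedWeight P w w' a = ∑ a ∈ P with p a, w a - ∑ a ∈ Pᶜ with p a, w' a := by
  have hpos : ({a ∈ {a | p a} | a ∈ P} : Finset A) = {a ∈ P | p a} := by grind
  have hneg : ({a ∈ {a | p a} | a ∉ P} : Finset A) = {a ∈ Pᶜ | p a} := by grind [mem_compl]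
  simp only [signedWeight, sum_ite, sum_neg_distrib, hpos, hneg, sub_eq_add_neg]

theorem IsRevClosed.isZeroSumFiveFlow [DecidableEq A] {P : Finset A} (hP : D.IsRevClosed P)
    {W : ℤ} {w w' : A → ℤ}
    (hw : IsBalancedWeighting D.src (fun a ↦ D.src (D.rev a)) P W w)
    (hw' : IsBalancedWeighting D.src (fun a ↦ D.src (D.rev a)) Pᶜ W w') :
    D.IsZeroSumFiveFlow fun a ↦ signedWeight P w w' a + signedWeight P w w' (D.rev a) where
  map_rev a := by rw [D.rev_involutive, add_comm]
  ne_zero a := by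
    grind [signedWeight, hw.eq_one_or_two, hw'.eq_one_or_two, hP.rev_mem_iff (a := a)]
  natAbs_le a := by
    grind [signedWeight, hw.eq_one_or_two, hw'.eq_one_or_two, hP.rev_mem_iff (a := a)]
  even_of_rev_eq a ha := by rw [ha]; exact Even.add_self _
  sum_eq_zero v := by
    rw [sum_add_distrib, sum_filter_src_comp_rev, sum_signedWeight, sum_signedWeight, hw.sum_left,
      hw'.sum_left, hw.sum_right, hw'.sum_right, sub_self, add_zero]

theorem IsBridgeless.hasPrescribableFlow [Finite V] (hb : D.IsBridgeless) (hD : D.IsRegular (k + m))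
    (hk : Even k) (hkm : k ≤ m) (hmk : m < 2 * k) : D.HasPrescribableFlow := by
  classical
  intro a z hz hz0 hz4
  obtain ⟨P, hP, hPk⟩ := hb.exists_isRevClosed hD hk hkm (by omega)
  have hP' := hP.isBiregular hPk
  have hN' := hD.isBiregular_univ.sdiff hP' (subset_univ P)
  rw [← compl_eq_univ_sdiff, Nat.add_sub_cancel_left] at hN'
  obtain ⟨ζ, hζ, hzζ⟩ : ∃ ζ : ℤ, (ζ = 1 ∨ ζ = 2) ∧ (z = 2 * ζ ∨ z = -(2 * ζ)) :=
    ⟨|z| / 2, by grind, by grind⟩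
  obtain ⟨W, w, w', hw, hw', hwa, hwa'⟩ := hP'.exists_balancedWeighting_pair hN' hkm hmk a hζ
  have hf := hP.isZeroSumFiveFlow hw hw'
  by_cases hsign : z = 2 * signedWeight P w w' a
  · exact ⟨_, hf, fun ha ↦ by rw [ha, hsign, two_mul]⟩
  · exact ⟨_, hf.neg, fun ha ↦ by grind [signedWeight, Pi.neg_apply]⟩

end Flow

section Detach

variable {V A : Type*} [DecidableEq A] {D : HalfEdgeGraph V A} {a b : A}

variable (D) in
/-- The graph in which the edge `{a, rev a}` is cut into two half-edges. -/
def detach (a : A) : HalfEdgeGraph V A where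
  src := D.src
  rev b := if b = a ∨ b = D.rev a then b else D.rev b
  rev_involutive b := by
    have := D.rev_involutive.eq_iff (x := b) (y := a)
    have := D.rev_involutive.injective.eq_iff (a := b) (b := a)
    have := D.rev_involutive b
    grind

theorem detach_rev_self : (D.detach a).rev a = a := by simp [detach]

theorem detach_rev_rev : (D.detach a).rev (D.rev a) = D.rev a := by simp [detach]

theorem detach_rev_of_ne (hb : b ≠ a) (hb' : b ≠ D.rev a) : (D.detach a).rev b = D.rev b := by
  simp [detach, hb, hb']

theorem detach_rev_eq_of_rev_eq (hb : D.rev b = b) : (D.detach a).rev b = b := by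
  simp [detach, hb]

variable [Fintype A]

theorem card_rev_ne_detach_lt (ha : D.rev a ≠ a) :
    #{b | (D.detach a).rev b ≠ b} < #{b | D.rev b ≠ b} := by
  refine card_lt_card ((ssubset_iff_of_subset fun b hb ↦ ?_).2 ⟨a, ?_, ?_⟩)
  · rw [mem_filter_univ] at hb ⊢
    exact mt detach_rev_eq_of_rev_eq hb
  · simpa using ha
  · simp [detach_rev_self]

variable [DecidableEq V] {U : Finset V}

theorem IsZeroSumFiveFlow.glue {f₁ f₂ : A → ℤ} (hU : D.boundary U = {a})
    (h₁ : (D.detach a).IsZeroSumFiveFlow f₁) (h₂ : (D.detach a).IsZeroSumFiveFlow f₂)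
    (h : f₁ a = f₂ (D.rev a)) :
    D.IsZeroSumFiveFlow fun b ↦ if D.src b ∈ U then f₁ b else f₂ b where
  map_rev b := by
    have ha : a ∈ D.boundary U := by simp [hU]
    rw [mem_boundary] at ha
    by_cases hb : b = a
    · simp only [hb, ha, if_true, if_false, h]
    by_cases hb' : b = D.rev a
    · simp only [hb', D.rev_involutive a, ha, if_true, if_false, h]
    have hrev₁ := h₁.map_rev b
    have hrev₂ := h₂.map_rev b
    rw [detach_rev_of_ne hb hb'] at hrev₁ hrev₂
    simp only [src_rev_mem_iff_of_boundary_eq_singleton hU hb hb', hrev₁, hrev₂]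
  ne_zero b := by split_ifs; exacts [h₁.ne_zero b, h₂.ne_zero b]
  natAbs_le b := by split_ifs; exacts [h₁.natAbs_le b, h₂.natAbs_le b]
  even_of_rev_eq b hb := by
    have hb' := detach_rev_eq_of_rev_eq (a := a) hb
    split_ifs
    exacts [h₁.even_of_rev_eq b hb', h₂.even_of_rev_eq b hb']
  sum_eq_zero v := by
    by_cases hv : v ∈ U
    · refine (sum_congr rfl fun b hb ↦ ?_).trans (h₁.sum_eq_zero v)
      grind
    · refine (sum_congr rfl fun b hb ↦ ?_).trans (h₂.sum_eq_zero v)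
      grind

theorem HasPrescribableFlow.exists_of_src_mem (hD : (D.detach a).HasPrescribableFlow)
    (hU : D.boundary U = {a}) (hb : D.src b ∈ U) {z : ℤ} (hz : Even z) (hz0 : z ≠ 0)
    (hz4 : z.natAbs ≤ 4) : ∃ f, D.IsZeroSumFiveFlow f ∧ (D.rev b = b → f b = z) := by
  obtain ⟨f₁, h₁, hf₁⟩ := hD b z hz hz0 hz4
  obtain ⟨f₂, h₂, hf₂⟩ := hD (D.rev a) (f₁ a) (h₁.even_of_rev_eq a detach_rev_self)
    (h₁.ne_zero a) (h₁.natAbs_le a)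
  refine ⟨_, h₁.glue hU h₂ (hf₂ detach_rev_rev).symm, fun hrev ↦ ?_⟩
  simp only [hb, if_true, hf₁ (detach_rev_eq_of_rev_eq hrev)]

theorem hasPrescribableFlow_of_boundary_eq_singleton [Finite V] (hU : D.boundary U = {a})
    (ha : (D.detach a).HasPrescribableFlow) (ha' : (D.detach (D.rev a)).HasPrescribableFlow) :
    D.HasPrescribableFlow := by
  intro b z hz hz0 hz4
  by_cases hb : D.src b ∈ U
  · exact ha.exists_of_src_mem hU hb hz hz0 hz4
  · have := Fintype.ofFinite V
    have hU' : D.boundary Uᶜ = {D.rev a} := by rw [boundary_compl, hU, image_singleton]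
    exact ha'.exists_of_src_mem hU' (mem_compl.2 hb) hz hz0 hz4

end Detach

section Existence

variable {V A : Type*} [Finite V] [DecidableEq V] [Fintype A] {D : HalfEdgeGraph V A} {k m : ℕ}

theorem IsRegular.hasPrescribableFlow (hD : D.IsRegular (k + m))
    (hk : Even k) (hkm : k ≤ m) (hmk : m < 2 * k) : D.HasPrescribableFlow := by
  classical
  induction hn : #{b | D.rev b ≠ b} using Nat.strong_induction_on generalizing D with
  | _ n ih =>
    subst hn
    by_cases hb : D.IsBridgeless
    · exact hb.hasPrescribableFlow hD hk hkm hmk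
    · obtain ⟨U, hU⟩ := not_forall_not.1 hb
      obtain ⟨a, ha⟩ := card_eq_one.1 hU
      have hrev : D.rev a ≠ a := rev_ne_of_mem_boundary (ha ▸ mem_singleton_self a)
      have hrev' : D.rev (D.rev a) ≠ D.rev a := by rwa [D.rev_involutive, ne_comm]
      exact hasPrescribableFlow_of_boundary_eq_singleton ha
        (ih _ (card_rev_ne_detach_lt hrev) hD rfl) (ih _ (card_rev_ne_detach_lt hrev') hD rfl)

theorem IsRegular.exists_isZeroSumFiveFlow (hD : D.IsRegular (k + m))
    (hk : Even k) (hkm : k ≤ m) (hmk : m < 2 * k) : ∃ f, D.IsZeroSumFiveFlow f := by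
  rcases isEmpty_or_nonempty A with hA | ⟨⟨a⟩⟩
  · exact ⟨0, isEmptyElim, isEmptyElim, isEmptyElim, isEmptyElim, fun v ↦ by simp⟩
  · obtain ⟨f, hf, -⟩ :=
      hD.hasPrescribableFlow hk hkm hmk a 2 even_two two_ne_zero (by decide)
    exact ⟨f, hf⟩

end Existence

end HalfEdgeGraph

section Transfer

variable {V : Type*} (G : SimpleGraph V)

/-- The simple graph `G` as a graph without half-edges. -/
def halfEdgeGraphOf : HalfEdgeGraph V G.Dart where
  src d := d.fst
  rev d := d.symm
  rev_involutive := Dart.symm_involutive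

theorem exists_apply_edge_eq {β : Type*} [Nonempty β] {F : G.Dart → β}
    (hF : ∀ d, F d.symm = F d) : ∃ f : Sym2 V → β, ∀ d : G.Dart, f d.edge = F d := by
  have hfactors : F.FactorsThrough Dart.edge := fun d d' hdd' ↦ by
    rcases (dart_edge_eq_iff d d').1 hdd' with rfl | rfl
    exacts [rfl, hF d']
  exact ⟨Function.extend Dart.edge F (Classical.arbitrary _), hfactors.extend_apply _⟩

variable [Fintype V] [DecidableEq V] [DecidableRel G.Adj]

variable {G} in
theorem halfEdgeGraphOf_isRegular {r : ℕ} (hG : G.IsRegularOfDegree r) :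
    (halfEdgeGraphOf G).IsRegular r := fun v ↦
  (G.dart_fst_fiber_card_eq_degree v).trans (hG v)

theorem sum_incidenceFinset_eq_sum_darts {M : Type*} [AddCommMonoid M] (f : Sym2 V → M) (v : V) :
    ∑ e ∈ G.incidenceFinset v, f e = ∑ d : G.Dart with d.fst = v, f d.edge := by
  refine (sum_bij (fun d _ ↦ d.edge) ?_ ?_ ?_ fun _ _ ↦ rfl).symm
  · intro d hd
    rw [mem_filter_univ] at hd
    exact (G.mem_incidenceFinset v _).2 ⟨d.edge_mem, hd ▸ Sym2.mem_mk_left _ _⟩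
  · intro d hd d' hd' hdd'
    rw [mem_filter_univ] at hd hd'
    rcases (dart_edge_eq_iff _ _).1 hdd' with rfl | rfl
    · rfl
    · exact absurd (hd.trans hd'.symm) d'.snd_ne_fst
  · intro e he
    obtain ⟨he, w, rfl⟩ := (G.mem_incidenceFinset v _).1 he
    exact ⟨⟨(v, w), he⟩, by simp, rfl⟩

end Transfer

theorem stmt_3_general {V : Type*} [Fintype V] [DecidableEq V] (G : SimpleGraph V)
    [DecidableRel G.Adj] (r : ℕ) (hr : r = 4 ∨ r = 5 ∨ 8 ≤ r) (hreg : G.IsRegularOfDegree r) :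
    ∃ f : Sym2 V → ℤ,
      (∀ e ∈ G.edgeFinset, f e ≠ 0 ∧ (f e).natAbs ≤ 4) ∧
      (∀ v : V, ∑ e ∈ G.incidenceFinset v, f e = 0) := by
  obtain ⟨k, m, rfl, hk, hkm, hmk⟩ : ∃ k m, k + m = r ∧ Even k ∧ k ≤ m ∧ m < 2 * k :=
    ⟨2 * (r / 4), r - 2 * (r / 4), by omega, even_two_mul _, by omega, by omega⟩
  obtain ⟨F, hF⟩ := (halfEdgeGraphOf_isRegular hreg).exists_isZeroSumFiveFlow hk hkm hmk
  obtain ⟨f, hf⟩ := exists_apply_edge_eq G hF.map_rev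
  refine ⟨f, fun e he ↦ ?_, fun v ↦ ?_⟩
  · obtain ⟨d, rfl⟩ : ∃ d : G.Dart, d.edge = e := by
      induction e with
      | _ u v => exact ⟨⟨(u, v), mem_edgeFinset.1 he⟩, rfl⟩
    rw [hf]
    exact ⟨hF.ne_zero d, hF.natAbs_le d⟩
  · rw [sum_incidenceFinset_eq_sum_darts]
    simp only [hf]
    exact hF.sum_eq_zero v

/-- For every odd integer `r ≥ 9`, every `r`-regular graph admits a zero-sum 5-flow. -/
theorem stmt_3 {V : Type*} [Fintype V] [DecidableEq V] (G : SimpleGraph V)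
    [DecidableRel G.Adj] (r : ℕ) (hodd : Odd r) (hr : 9 ≤ r)
    (hreg : G.IsRegularOfDegree r) :
    ∃ f : Sym2 V → ℤ,
      (∀ e ∈ G.edgeFinset, f e ≠ 0 ∧ (f e).natAbs ≤ 4) ∧
      (∀ v : V, ∑ e ∈ G.incidenceFinset v, f e = 0) :=
  stmt_3_general G r (by omega) hreg
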